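/- Let X_1 and ε_2 be independent random variables, each uniformly distributed on [−1,1], let β ≥ 1 be a real constant, and let X_2 = βX_1 + ε_2. Then E[(X_1 − E[X_1 | X_2])²] = (2β − 1)/(6β³). -/

import Mathlib

open MeasureTheory ProbabilityTheory
open scoped ENNReal

namespace ULM

/-- lower end -/
noncomputable def lo (β y : ℝ) : ℝ := max (-1) ((y - 1) / β)
/-- upper end -/
noncomputable def hi (β y : ℝ) : ℝ := min 1 ((y + 1) / β)
/-- midpoint -/
noncomputable def mid (β y : ℝ) : ℝ := (lo β y + hi β y) / 2
/-- support of the joint law -/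
def S (β : ℝ) : Set (ℝ × ℝ) := {p | p.1 ∈ Set.Icc (-1 : ℝ) 1 ∧ p.2 - β * p.1 ∈ Set.Icc (-1 : ℝ) 1}

lemma measurable_mid (β : ℝ) : Measurable (mid β) := by
  unfold mid lo hi; fun_prop

lemma measurableSet_S (β : ℝ) : MeasurableSet (S β) := by
  have h1 : Measurable (fun p : ℝ × ℝ => p.1) := by fun_prop
  have h2 : Measurable (fun p : ℝ × ℝ => p.2 - β * p.1) := by fun_prop
  exact (h1 measurableSet_Icc).inter (h2 measurableSet_Icc)

lemma mem_S {β : ℝ} (hβ : 1 ≤ β) (x y : ℝ) : (x, y) ∈ S β ↔ x ∈ Set.Icc (lo β y) (hi β y) := by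
  have h0 : 0 < β := by linarith
  simp only [S, lo, hi, Set.mem_ofPred_eq, Set.mem_Icc, max_le_iff, le_min_iff, div_le_iff₀ h0,
    le_div_iff₀ h0]
  constructor
  · rintro ⟨⟨_, _⟩, _, _⟩
    refine ⟨⟨?_, ?_⟩, ?_, ?_⟩ <;> linarith
  · rintro ⟨⟨_, _⟩, _, _⟩
    refine ⟨⟨?_, ?_⟩, ?_, ?_⟩ <;> linarith

lemma bdd_mid {β : ℝ} (hβ : 1 ≤ β) {p : ℝ × ℝ} (hp : p ∈ S β) : |p.1| ≤ 1 ∧ |mid β p.2| ≤ 1 := by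
  have h := (mem_S hβ p.1 p.2).1 hp
  have h1 : -1 ≤ lo β p.2 := le_max_left _ _
  have h2 : hi β p.2 ≤ 1 := min_le_left _ _
  obtain ⟨h3, h4⟩ := h
  unfold mid
  constructor <;> rw [abs_le] <;> constructor <;> linarith

lemma law {Ω : Type*} [MeasurableSpace Ω] (μ : Measure Ω) [IsProbabilityMeasure μ]
    (X₁ ε₂ : Ω → ℝ) (hX₁ : Measurable X₁) (hε₂ : Measurable ε₂)
    (hindep : IndepFun X₁ ε₂ μ)
    (hu1 : Measure.map X₁ μ = (2 : ℝ≥0∞)⁻¹ • volume.restrict (Set.Icc (-1 : ℝ) 1))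
    (hu2 : Measure.map ε₂ μ = (2 : ℝ≥0∞)⁻¹ • volume.restrict (Set.Icc (-1 : ℝ) 1))
    (β : ℝ) :
    Measure.map (fun ω => (X₁ ω, β * X₁ ω + ε₂ ω)) μ =
      (4 : ℝ≥0∞)⁻¹ • (volume : Measure (ℝ × ℝ)).restrict (S β) := by
  have hj := (indepFun_iff_map_prod_eq_prod_map_map hX₁.aemeasurable hε₂.aemeasurable).1 hindep
  rw [hu1, hu2, Measure.prod_smul_left, Measure.prod_smul_right, smul_smul,
    Measure.prod_restrict] at hj
  have hmp : MeasurePreserving (fun p : ℝ × ℝ => (p.1, β * p.1 + p.2))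
      ((volume : Measure ℝ).prod volume) ((volume : Measure ℝ).prod volume) := by
    refine MeasurePreserving.skew_product (f := id) (g := fun x e => β * x + e)
      (MeasurePreserving.id _) (by fun_prop) ?_
    exact Filter.Eventually.of_forall fun x => map_add_left_eq_self _ _
  have hc : (fun ω => (X₁ ω, β * X₁ ω + ε₂ ω)) =
      (fun p : ℝ × ℝ => (p.1, β * p.1 + p.2)) ∘ (fun ω => (X₁ ω, ε₂ ω)) := rfl
  rw [hc, ← Measure.map_map hmp.measurable (by fun_prop), hj, Measure.map_smul]
  have h4 : (2 : ℝ≥0∞)⁻¹ * 2⁻¹ = 4⁻¹ := by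
    rw [← ENNReal.mul_inv (by simp) (by simp)]; norm_num
  rw [h4]
  congr 1
  have hpre : Set.Icc (-1 : ℝ) 1 ×ˢ Set.Icc (-1 : ℝ) 1 =
      (fun p : ℝ × ℝ => (p.1, β * p.1 + p.2)) ⁻¹' (S β) := by
    ext p; simp only [S, Set.mem_prod, Set.mem_preimage, Set.mem_ofPred_eq, add_sub_cancel_left]
  rw [hpre]
  exact (hmp.restrict_preimage (measurableSet_S β)).map_eq

lemma integrable_law {β C : ℝ} {ν : Measure (ℝ × ℝ)} [IsFiniteMeasure ν]
    (hν : ν = (4 : ℝ≥0∞)⁻¹ • (volume : Measure (ℝ × ℝ)).restrict (S β))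
    {F : ℝ × ℝ → ℝ} (hF : Measurable F) (hC : ∀ p ∈ S β, |F p| ≤ C) : Integrable F ν := by
  refine Integrable.of_bound hF.aestronglyMeasurable C ?_
  rw [hν]
  refine Measure.ae_smul_measure ?_ _
  filter_upwards [ae_restrict_mem (measurableSet_S β)] with p hp using hC p hp

lemma integral_law {β C : ℝ} (hβ : 1 ≤ β) {ν : Measure (ℝ × ℝ)} [IsFiniteMeasure ν]
    (hν : ν = (4 : ℝ≥0∞)⁻¹ • (volume : Measure (ℝ × ℝ)).restrict (S β))
    {F : ℝ × ℝ → ℝ} (hF : Measurable F) (hC : ∀ p ∈ S β, |F p| ≤ C) :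
    ∫ p, F p ∂ν = (1 / 4) * ∫ y, ∫ x in Set.Icc (lo β y) (hi β y), F (x, y) := by
  have hi' := integrable_law hν hF hC
  rw [hν, integrable_smul_measure (by simp) (by simp)] at hi'
  rw [hν, integral_smul_measure, ← integral_indicator (measurableSet_S β)]
  have hi2 : Integrable ((S β).indicator F) ((volume : Measure ℝ).prod volume) :=
    (integrable_indicator_iff (measurableSet_S β)).2 hi'
  rw [Measure.volume_eq_prod, integral_prod_symm _ hi2]
  simp only [smul_eq_mul]
  congr 1
  · simp
  · congr 1; ext y
    rw [← integral_indicator measurableSet_Icc]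
    congr 1; ext x
    simp only [Set.indicator, mem_S hβ]

lemma inner_zero (β y : ℝ) : ∫ x in Set.Icc (lo β y) (hi β y), (x - mid β y) = 0 := by
  rcases le_or_gt (lo β y) (hi β y) with h | h
  · rw [integral_Icc_eq_integral_Ioc, ← intervalIntegral.integral_of_le h,
      intervalIntegral.integral_sub (by simp) (by simp)]
    simp [mid]; ring
  · simp [Set.Icc_eq_empty (not_le.2 h)]

lemma inner_sq (β y : ℝ) : ∫ x in Set.Icc (lo β y) (hi β y), (x - mid β y) ^ 2 =
    (max 0 (hi β y - lo β y)) ^ 3 / 12 := by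
  rcases le_or_gt (lo β y) (hi β y) with h | h
  · rw [integral_Icc_eq_integral_Ioc, ← intervalIntegral.integral_of_le h,
      intervalIntegral.integral_comp_sub_right (fun x => x ^ 2), max_eq_right (by linarith)]
    simp [mid]; ring
  · rw [max_eq_left (by linarith)]
    simp [Set.Icc_eq_empty (not_le.2 h)]

lemma outer {β : ℝ} (hβ : 1 ≤ β) :
    ∫ y, (max 0 (hi β y - lo β y)) ^ 3 / 12 = (4 * β - 2) / (3 * β ^ 3) := by
  have h0 : 0 < β := by linarith
  have hcont : Continuous (fun y => (max 0 (hi β y - lo β y)) ^ 3 / 12) := by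
    unfold hi lo; fun_prop
  have hlo1 : ∀ y, y ≤ 1 - β → lo β y = -1 := fun y hy => by
    unfold lo; apply max_eq_left; rw [div_le_iff₀ h0]; linarith
  have hlo2 : ∀ y, 1 - β ≤ y → lo β y = (y - 1) / β := fun y hy => by
    unfold lo; apply max_eq_right; rw [le_div_iff₀ h0]; linarith
  have hhi1 : ∀ y, y ≤ β - 1 → hi β y = (y + 1) / β := fun y hy => by
    unfold hi; apply min_eq_right; rw [div_le_iff₀ h0]; linarith
  have hhi2 : ∀ y, β - 1 ≤ y → hi β y = 1 := fun y hy => by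
    unfold hi; apply min_eq_left; rw [le_div_iff₀ h0]; linarith
  rw [← setIntegral_eq_integral_of_forall_compl_eq_zero (s := Set.Ioc (-(β + 1)) (β + 1)),
    ← intervalIntegral.integral_of_le (by linarith),
    ← intervalIntegral.integral_add_adjacent_intervals (b := 1 - β)
      (hcont.intervalIntegrable _ _) (hcont.intervalIntegrable _ _),
    ← intervalIntegral.integral_add_adjacent_intervals (a := 1 - β) (b := β - 1)
      (hcont.intervalIntegrable _ _) (hcont.intervalIntegrable _ _)]
  · have e1 : ∫ y in (-(β + 1))..(1 - β), (max 0 (hi β y - lo β y)) ^ 3 / 12 =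
        ∫ y in (-(β + 1))..(1 - β), (y + (β + 1)) ^ 3 * (1 / (12 * β ^ 3)) := by
      apply intervalIntegral.integral_congr
      intro y hy
      rw [Set.uIcc_of_le (by linarith)] at hy
      obtain ⟨hy1, hy2⟩ := hy
      have : hi β y - lo β y = (y + (β + 1)) / β := by
        rw [hlo1 y hy2, hhi1 y (by linarith)]; field_simp; ring
      simp only [this]
      rw [max_eq_right (div_nonneg (by linarith) h0.le)]
      field_simp
    have e2 : ∫ y in (1 - β)..(β - 1), (max 0 (hi β y - lo β y)) ^ 3 / 12 =
        ∫ y in (1 - β)..(β - 1), (2 / β) ^ 3 / 12 := by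
      apply intervalIntegral.integral_congr
      intro y hy
      rw [Set.uIcc_of_le (by linarith)] at hy
      obtain ⟨hy1, hy2⟩ := hy
      have : hi β y - lo β y = 2 / β := by
        rw [hlo2 y hy1, hhi1 y hy2]; field_simp; ring
      simp only [this]
      rw [max_eq_right (by positivity)]
    have e3 : ∫ y in (β - 1)..(β + 1), (max 0 (hi β y - lo β y)) ^ 3 / 12 =
        ∫ y in (β - 1)..(β + 1), ((β + 1) - y) ^ 3 * (1 / (12 * β ^ 3)) := by
      apply intervalIntegral.integral_congr
      intro y hy
      rw [Set.uIcc_of_le (by linarith)] at hy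
      obtain ⟨hy1, hy2⟩ := hy
      have : hi β y - lo β y = ((β + 1) - y) / β := by
        rw [hlo2 y (by linarith), hhi2 y hy1]; field_simp; ring
      simp only [this]
      rw [max_eq_right (div_nonneg (by linarith) h0.le)]
      field_simp
    rw [e1, e2, e3, intervalIntegral.integral_mul_const, intervalIntegral.integral_mul_const,
      intervalIntegral.integral_comp_add_right (fun x => x ^ 3),
      intervalIntegral.integral_comp_sub_left (fun x => x ^ 3)]
    simp only [integral_pow, intervalIntegral.integral_const, smul_eq_mul]
    field_simp
    ring
  · intro y hy
    have : hi β y - lo β y ≤ 0 := by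
      rw [Set.mem_Ioc, not_and_or, not_lt, not_le] at hy
      rcases hy with hy | hy
      · rw [hlo1 y (by linarith), hhi1 y (by linarith)]
        have : (y + 1) / β ≤ -1 := by rw [div_le_iff₀ h0]; linarith
        linarith
      · rw [hlo2 y (by linarith), hhi2 y (by linarith)]
        have : 1 ≤ (y - 1) / β := by rw [le_div_iff₀ h0]; linarith
        linarith
    simp [max_eq_left this]

end ULM

open ULM in
/-- For the linear model `X₂ = β X₁ + ε₂` with `X₁, ε₂` i.i.d. uniform on `[-1,1]`
and `β ≥ 1`, the expected conditional variance `E[(X₁ − E[X₁ | X₂])²]` equals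
`(2β − 1)/(6β³)`. -/
theorem uniform_linear_model_residual_variance_of_one_le
    {Ω : Type*} [MeasurableSpace Ω] (μ : Measure Ω) [IsProbabilityMeasure μ]
    (X₁ ε₂ : Ω → ℝ) (hX₁ : Measurable X₁) (hε₂ : Measurable ε₂)
    (hindep : IndepFun X₁ ε₂ μ)
    (hu1 : Measure.map X₁ μ = (2 : ℝ≥0∞)⁻¹ • volume.restrict (Set.Icc (-1 : ℝ) 1))
    (hu2 : Measure.map ε₂ μ = (2 : ℝ≥0∞)⁻¹ • volume.restrict (Set.Icc (-1 : ℝ) 1))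
    (β : ℝ) (hβ : 1 ≤ β)
    (X₂ : Ω → ℝ) (hX₂ : X₂ = fun ω => β * X₁ ω + ε₂ ω) :
    ∫ ω, (X₁ ω - (μ[X₁ | MeasurableSpace.comap X₂ Real.measurableSpace]) ω) ^ 2 ∂μ =
      (2 * β - 1) / (6 * β ^ 3) := by
  have h0 : 0 < β := by linarith
  have hX₂m : Measurable X₂ := by rw [hX₂]; fun_prop
  have hlaw : Measure.map (fun ω => (X₁ ω, X₂ ω)) μ =
      (4 : ℝ≥0∞)⁻¹ • (volume : Measure (ℝ × ℝ)).restrict (S β) := by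
    rw [hX₂]; exact law μ X₁ ε₂ hX₁ hε₂ hindep hu1 hu2 β
  have hpm : Measurable (fun ω => (X₁ ω, X₂ ω)) := hX₁.prodMk hX₂m
  have hgm := measurable_mid β
  have hint : ∀ F : ℝ × ℝ → ℝ, Measurable F → ∀ C, (∀ p ∈ S β, |F p| ≤ C) →
      Integrable (fun ω => F (X₁ ω, X₂ ω)) μ := fun F hF C hC =>
    (integrable_law hlaw hF hC).comp_measurable hpm
  have hval : ∀ F : ℝ × ℝ → ℝ, Measurable F → ∀ C, (∀ p ∈ S β, |F p| ≤ C) →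
      ∫ ω, F (X₁ ω, X₂ ω) ∂μ =
        (1 / 4) * ∫ y, ∫ x in Set.Icc (lo β y) (hi β y), F (x, y) := fun F hF C hC => by
    rw [← integral_law hβ hlaw hF hC, integral_map hpm.aemeasurable hF.aestronglyMeasurable]
  have hI1 : Integrable X₁ μ := hint (fun p => p.1) (by fun_prop) 1 fun p hp => (bdd_mid hβ hp).1
  have hI2 : Integrable (fun ω => mid β (X₂ ω)) μ :=
    hint (fun p => mid β p.2) (by fun_prop) 1 fun p hp => (bdd_mid hβ hp).2
  have hb2 : ∀ p ∈ S β, |p.1 - mid β p.2| ≤ 2 := fun p hp => by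
    obtain ⟨h1, h2⟩ := bdd_mid hβ hp
    rw [abs_le] at *
    constructor <;> linarith
  have hce : (fun ω => mid β (X₂ ω)) =ᵐ[μ]
      μ[X₁ | MeasurableSpace.comap X₂ Real.measurableSpace] := by
    refine ae_eq_condExp_of_forall_setIntegral_eq hX₂m.comap_le hI1
      (fun s _ _ => hI2.integrableOn) ?_ ?_
    · rintro s ⟨B, hB, rfl⟩ -
      have hsm : MeasurableSet (X₂ ⁻¹' B) := hX₂m hB
      have hB' : MeasurableSet (Prod.snd ⁻¹' B : Set (ℝ × ℝ)) := measurable_snd hB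
      rw [eq_comm, ← sub_eq_zero, ← integral_sub hI1.integrableOn hI2.integrableOn,
        ← integral_indicator hsm]
      have := hval ((Prod.snd ⁻¹' B).indicator fun p => p.1 - mid β p.2)
        (Measurable.indicator (by fun_prop) hB') 2 (fun p hp => by
          by_cases h : p ∈ (Prod.snd ⁻¹' B : Set (ℝ × ℝ))
          · rw [Set.indicator_of_mem h]; exact hb2 p hp
          · rw [Set.indicator_of_notMem h]; simp)
      refine Eq.trans this ?_
      have hz : ∀ y, ∫ x in Set.Icc (lo β y) (hi β y),
          (Prod.snd ⁻¹' B).indicator (fun p : ℝ × ℝ => p.1 - mid β p.2) (x, y) = 0 := by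
        intro y
        by_cases h : y ∈ B
        · simpa [Set.indicator, h] using inner_zero β y
        · simp [Set.indicator, h]
      simp [hz]
    · exact (hgm.comp (comap_measurable X₂)).aestronglyMeasurable
  have h1 : ∫ ω, (X₁ ω - (μ[X₁ | MeasurableSpace.comap X₂ Real.measurableSpace]) ω) ^ 2 ∂μ =
      ∫ ω, (X₁ ω - mid β (X₂ ω)) ^ 2 ∂μ := by
    apply integral_congr_ae
    filter_upwards [hce] with ω hω
    rw [← hω]
  rw [h1]
  have h2 := hval (fun p => (p.1 - mid β p.2) ^ 2) (by fun_prop) 4 (fun p hp => by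
    have := hb2 p hp
    rw [abs_of_nonneg (sq_nonneg _), ← sq_abs]
    nlinarith [abs_nonneg (p.1 - mid β p.2)])
  simp only [inner_sq, outer hβ] at h2
  rw [h2]
  field_simp
  ring
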